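/- arXiv:2211.09196 — 3 statements merged into one kernel-verified Lean document; each statement's English description precedes it below -/
import Mathlib

section
/- Let τ, α, ν > 0 and set b_m(τ,α,ν) = (B(α,ν+τ)/B(α,ν)) · (τ)_m (α)_m / ((α+ν+τ)_m · m!) for every integer m ≥ 0. Then: (i) b_m(τ,α,ν) > 0 for every m; (ii) the sequence (b_m(τ,α,ν))_{m≥0} is summable and Σ_{m=0}^∞ b_m(τ,α,ν) = 1; and (iii) for every x ∈ [−1,1], Σ_{m=0}^∞ b_m(τ,α,ν) x^m = (B(α,ν+τ)/B(α,ν)) · ₂F₁(τ, α; α+ν+τ; x). -/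
/-!
The Schoenberg sequence consists of the weights of a mixture of Beta distributions. Writing
`β(a, b)` for the Beta density `x ^ (a - 1) * (1 - x) ^ (b - 1) / B(a, b)` on `(0, 1)`, the binomial
series `(1 - x) ^ (-τ) = ∑ (τ)ₙ / n! * xⁿ` together with
`B(α + n, ν + τ) = B(α, ν + τ) * (α)ₙ / (α + ν + τ)ₙ` gives, pointwise on `(0, 1)`,
`β(α, ν) = ∑ₙ bₙ(τ, α, ν) * β(α + n, ν + τ)` (`hasSum_schoenbergF_mul_betaPDFReal`).
All terms are nonnegative and every Beta density has total mass `1`, so integrating termwise yields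
`∑ₙ bₙ = 1`; this is Gauss's summation theorem in disguise. The formula at a general point `x` only
pulls the constant `B(α, ν + τ) / B(α, ν)` out of the series.
-/

open scoped Real BigOperators

/-- The rising factorial (Pochhammer symbol) `(x)_j = x(x+1)⋯(x+j-1)`. -/
noncomputable def poch (x : ℝ) (j : ℕ) : ℝ := ∏ i ∈ Finset.range j, (x + i)

/-- The Beta function `B(x,y) = Γ(x)Γ(y)/Γ(x+y)`. -/
noncomputable def betaFn (x y : ℝ) : ℝ := Real.Gamma x * Real.Gamma y / Real.Gamma (x + y)

/-- The Gauss hypergeometric function `₂F₁(a,b;c;x)`. -/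
noncomputable def hyp2F1 (a b c x : ℝ) : ℝ :=
  ∑' n : ℕ, poch a n * poch b n / (poch c n * (Nat.factorial n : ℝ)) * x ^ n

/-- The Schoenberg sequence of the 𝓕-family. -/
noncomputable def schoenbergF (τ α ν : ℝ) (m : ℕ) : ℝ :=
  betaFn α (ν + τ) / betaFn α ν *
    (poch τ m * poch α m / (poch (α + ν + τ) m * (Nat.factorial m : ℝ)))

lemma poch_pos {x : ℝ} (hx : 0 < x) (n : ℕ) : 0 < poch x n :=
  Finset.prod_pos fun i _ => by positivity

lemma betaFn_pos {x y : ℝ} (hx : 0 < x) (hy : 0 < y) : 0 < betaFn x y :=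
  ProbabilityTheory.beta_pos hx hy

lemma schoenbergF_pos {τ α ν : ℝ} (hτ : 0 < τ) (hα : 0 < α) (hν : 0 < ν) (m : ℕ) :
    0 < schoenbergF τ α ν m := by
  have h1 := betaFn_pos hα (add_pos hν hτ)
  have h2 := betaFn_pos hα hν
  have h3 := poch_pos hτ m
  have h4 := poch_pos hα m
  have h5 := poch_pos (add_pos (add_pos hα hν) hτ) m
  unfold schoenbergF
  positivity

lemma Gamma_add_nat_eq_poch {x : ℝ} (hx : 0 < x) (n : ℕ) :
    Real.Gamma (x + n) = poch x n * Real.Gamma x := by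
  induction n with
  | zero => simp [poch]
  | succ n ih =>
    have h : poch x (n + 1) = poch x n * (x + n) := Finset.prod_range_succ _ _
    rw [Nat.cast_succ, ← add_assoc, Real.Gamma_add_one (by positivity), ih, h]
    ring

lemma betaFn_add_nat {x y : ℝ} (hx : 0 < x) (hy : 0 < y) (n : ℕ) :
    betaFn (x + n) y = betaFn x y * (poch x n / poch (x + y) n) := by
  have h1 := (poch_pos (add_pos hx hy) n).ne'
  have h2 := (Real.Gamma_pos_of_pos (add_pos hx hy)).ne'
  unfold betaFn
  rw [add_right_comm, Gamma_add_nat_eq_poch hx, Gamma_add_nat_eq_poch (add_pos hx hy)]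
  field_simp

lemma poch_eq_eval_ascPochhammer (x : ℝ) (n : ℕ) : poch x n = (ascPochhammer ℝ n).eval x := by
  induction n with
  | zero => simp [poch]
  | succ n ih =>
    rw [ascPochhammer_succ_eval, ← ih]
    exact Finset.prod_range_succ _ _

lemma ringChoose_eq_poch_div_factorial (a : ℝ) (n : ℕ) :
    Ring.choose (a + n - 1) n = poch a n / (Nat.factorial n : ℝ) := by
  have h := Ring.factorial_nsmul_multichoose_eq_ascPochhammer a n
  rw [Ring.multichoose_eq, nsmul_eq_mul, Polynomial.ascPochhammer_smeval_eq_eval,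
    ← poch_eq_eval_ascPochhammer] at h
  rw [eq_div_iff (by positivity), ← h, mul_comm]

/-- The binomial series with negative exponent, in terms of rising factorials. -/
lemma hasSum_poch_div_factorial_mul_pow (a : ℝ) {x : ℝ} (hx : |x| < 1) :
    HasSum (fun n : ℕ => poch a n / (Nat.factorial n : ℝ) * x ^ n) (1 / (1 - x) ^ a) := by
  have h := (Real.one_div_one_sub_rpow_hasFPowerSeriesOnBall_zero a).hasSum (y := x)
    (by simpa [enorm_eq_nnnorm, ← NNReal.coe_lt_coe] using hx)
  simpa [ringChoose_eq_poch_div_factorial, mul_comm] using h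

/-- The Beta density with parameters `(α, ν)` is the mixture, with weights `schoenbergF τ α ν n`,
of the Beta densities with parameters `(α + n, ν + τ)`. -/
lemma hasSum_schoenbergF_mul_betaPDFReal {τ α ν : ℝ} (hτ : 0 < τ) (hα : 0 < α) (hν : 0 < ν)
    (x : ℝ) :
    HasSum (fun n : ℕ => schoenbergF τ α ν n * ProbabilityTheory.betaPDFReal (α + n) (ν + τ) x)
      (ProbabilityTheory.betaPDFReal α ν x) := by
  unfold ProbabilityTheory.betaPDFReal
  split_ifs with hx
  swap
  · simp
  obtain ⟨hx0, hx1⟩ := hx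
  have hx1' : 0 < 1 - x := by linarith
  have h := (hasSum_poch_div_factorial_mul_pow τ (abs_lt.2 ⟨by linarith, hx1⟩)).mul_left
    (1 / betaFn α ν * x ^ (α - 1) * (1 - x) ^ (ν + τ - 1))
  have hval : 1 / betaFn α ν * x ^ (α - 1) * (1 - x) ^ (ν + τ - 1) * (1 / (1 - x) ^ τ) =
      1 / betaFn α ν * x ^ (α - 1) * (1 - x) ^ (ν - 1) := by
    have := (Real.rpow_pos_of_pos hx1' τ).ne'
    rw [show ν + τ - 1 = (ν - 1) + τ by ring, Real.rpow_add hx1']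
    field_simp
  rw [hval] at h
  convert! h using 2 with n
  have h1 := (betaFn_pos hα (add_pos hν hτ)).ne'
  have h2 := (betaFn_pos hα hν).ne'
  have h4 := (poch_pos hα n).ne'
  have h5 := (poch_pos (add_pos hα (add_pos hν hτ)) n).ne'
  -- Mathlib's `ProbabilityTheory.beta` is definitionally `betaFn`.
  change schoenbergF τ α ν n * (1 / betaFn (α + n) (ν + τ) * _ * _) = _
  rw [betaFn_add_nat hα (add_pos hν hτ), schoenbergF, add_assoc α ν τ,
    show α + n - 1 = (α - 1) + n by ring, Real.rpow_add_natCast hx0.ne']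
  field_simp

/-- The weights sum to `1`. Working in `ℝ≥0∞` makes termwise integration of the mixture identity
unconditional, so that summability is part of the conclusion. -/
lemma tsum_ofReal_schoenbergF {τ α ν : ℝ} (hτ : 0 < τ) (hα : 0 < α) (hν : 0 < ν) :
    ∑' n : ℕ, ENNReal.ofReal (schoenbergF τ α ν n) = 1 := by
  have hb := fun n => (schoenbergF_pos hτ hα hν n).le
  have hnonneg : ∀ (n : ℕ) (x : ℝ), 0 ≤ ProbabilityTheory.betaPDFReal (α + n) (ν + τ) x := by
    intro n x
    by_cases hx : 0 < x ∧ x < 1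
    · exact (ProbabilityTheory.betaPDFReal_pos hx.1 hx.2 (by positivity) (by positivity)).le
    · simp [ProbabilityTheory.betaPDFReal, hx]
  have hmix : ∀ x, ProbabilityTheory.betaPDF α ν x =
      ∑' n : ℕ, ENNReal.ofReal (schoenbergF τ α ν n) *
        ProbabilityTheory.betaPDF (α + n) (ν + τ) x := by
    intro x
    have h := hasSum_schoenbergF_mul_betaPDFReal hτ hα hν x
    rw [ProbabilityTheory.betaPDF, ← h.tsum_eq,
      ENNReal.ofReal_tsum_of_nonneg (fun n => mul_nonneg (hb n) (hnonneg n x)) h.summable]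
    exact tsum_congr fun n => ENNReal.ofReal_mul (hb n)
  have hmeas : ∀ n : ℕ, Measurable (ProbabilityTheory.betaPDF (α + n) (ν + τ)) := fun n =>
    (ProbabilityTheory.measurable_betaPDFReal _ _).ennreal_ofReal
  rw [← ProbabilityTheory.lintegral_betaPDF_eq_one hα hν, MeasureTheory.lintegral_congr hmix,
    MeasureTheory.lintegral_tsum fun n => ((hmeas n).const_mul _).aemeasurable]
  refine tsum_congr fun n => ?_
  rw [MeasureTheory.lintegral_const_mul _ (hmeas n),
    ProbabilityTheory.lintegral_betaPDF_eq_one (by positivity) (by positivity), mul_one]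

theorem stmt0 (τ α ν : ℝ) (hτ : 0 < τ) (hα : 0 < α) (hν : 0 < ν) :
    (∀ m : ℕ, 0 < schoenbergF τ α ν m) ∧
    Summable (schoenbergF τ α ν) ∧
    (∑' m : ℕ, schoenbergF τ α ν m) = 1 ∧
    (∀ x ∈ Set.Icc (-1 : ℝ) 1,
      (∑' m : ℕ, schoenbergF τ α ν m * x ^ m) =
        betaFn α (ν + τ) / betaFn α ν * hyp2F1 τ α (α + ν + τ) x) := by
  have hb := schoenbergF_pos hτ hα hν
  have hsum := tsum_ofReal_schoenbergF hτ hα hν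
  have hreal : ∀ n, (ENNReal.ofReal (schoenbergF τ α ν n)).toReal = schoenbergF τ α ν n :=
    fun n => ENNReal.toReal_ofReal (hb n).le
  refine ⟨hb, ?_, ?_, fun x _ => ?_⟩
  · simpa only [hreal] using ENNReal.summable_toReal (hsum.trans_ne ENNReal.one_ne_top)
  · have h := ENNReal.tsum_toReal_eq fun n => ENNReal.ofReal_ne_top (r := schoenbergF τ α ν n)
    simpa only [hreal, hsum, ENNReal.toReal_one] using h.symm
  · rw [hyp2F1, ← tsum_mul_left]
    exact tsum_congr fun m => mul_assoc _ _ _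
end

section
/- Let τ, α, ν > 0 and let d ≥ 2 be an integer. Define b_{m,d} = C_{m,d}(τ,α,ν) · S_{m,d}(τ,α,ν) for m ≥ 0 (the d-Schoenberg coefficients of the 𝓕-family). Then b_{m,d} ~ (Γ(ν+α)Γ(ν+τ)/(Γ(α)Γ(ν)Γ(τ))) · (2^{ν+1} Γ(d/2+ν)/Γ(d/2)) · m^{−(1+2ν)} as m → ∞. -/
/-!
Write `s = α + ν + τ`. Expressing every rising factorial through Gamma values, and using the
duplication formulas for rising factorials and for `(m + 2j)!`, the `j`-th term of
`Cmd τ α ν d m * Smd τ α ν d m` becomes `K * prefactor d m * r (m + 2j) * G m j`, where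
`K = Γ(ν+α)Γ(ν+τ)/(Γ(α)Γ(ν)Γ(τ))` and

* `G m j = Γ(m/2+1/2+j) Γ(m/2-ν+j) / (j! Γ(m+(d+1)/2+j))` (`gaussTerm`) is the term of a `₂F₁(1)`
  series, which Gauss' theorem sums in closed form (`gaussValue`);
* `r n = Γ(n+α)Γ(n+τ)Γ(n/2+1) / (Γ(n+s)Γ(n+1)Γ(n/2-ν))` (`gaussRatio`) depends only on
  `n = m + 2j` and tends to `2^(-1-ν)`.

Only indices `n ≥ m` occur in the sum and `G m j ≥ 0` as soon as `m > 2ν`, so the factor `r` may be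
replaced by its limit (`tendsto_weighted_avg`). What remains is an explicit quotient of Gamma
functions, whose behaviour follows from `Γ(x+a)/Γ(x+b) ~ x^(a-b)` (`tendsto_Gamma_ratio`).

Gauss' theorem (`hasSum_gauss`) is obtained by integrating the binomial series of `(1-x)^(-a)`
against a Beta density; the Gamma asymptotics come from log-convexity for shifts in `(0,1)` and the
functional equation for the others.
-/

open scoped Real BigOperators
open Filter

/-- The constant `C_{m,d}(τ,α,ν)`. -/
noncomputable def Cmd (τ α ν : ℝ) (d m : ℕ) : ℝ :=
  schoenbergF τ α ν m * Real.sqrt π * Real.Gamma ((m : ℝ) + d - 1) /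
    ((2 : ℝ) ^ ((m : ℝ) + d - 2) * Real.Gamma ((d : ℝ) / 2) *
      Real.Gamma ((m : ℝ) + ((d : ℝ) - 1) / 2))

/-- The `₄F₃(1)` series `S_{m,d}(τ,α,ν)`. -/
noncomputable def Smd (τ α ν : ℝ) (d m : ℕ) : ℝ :=
  ∑' j : ℕ,
    poch ((α + m) / 2) j * poch ((α + m + 1) / 2) j * poch ((τ + m) / 2) j *
        poch ((τ + m + 1) / 2) j /
      (poch ((α + ν + τ + m) / 2) j * poch ((α + ν + τ + m + 1) / 2) j *
        poch ((m : ℝ) + ((d : ℝ) + 1) / 2) j * (Nat.factorial j : ℝ))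

section Helpers
open Real MeasureTheory Set Topology

/-! ### Rising factorials -/

theorem poch_succ (x : ℝ) (j : ℕ) : poch x (j + 1) = poch x j * (x + j) := by
  simp [poch, Finset.prod_range_succ]

theorem Gamma_add_nat {x : ℝ} (hx : 0 < x) (j : ℕ) : Gamma (x + j) = Gamma x * poch x j := by
  induction j with
  | zero => simp [poch]
  | succ j ih =>
    rw [poch_succ, ← mul_assoc, ← ih, Nat.cast_succ, ← add_assoc,
      Gamma_add_one (by positivity), mul_comm]

theorem poch_half_mul (x : ℝ) (j : ℕ) :
    poch (x / 2) j * poch ((x + 1) / 2) j = poch x (2 * j) / 4 ^ j := by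
  induction j with
  | zero => simp [poch]
  | succ j ih =>
    rw [show 2 * (j + 1) = (2 * j + 1) + 1 by ring, poch_succ x (2 * j + 1), poch_succ x (2 * j),
      poch_succ, poch_succ, mul_mul_mul_comm, ih, pow_succ]
    push_cast
    field_simp
    ring

/-! ### Gauss' summation theorem -/

/-- The binomial series of `(1 - x) ^ (-a)`, with coefficients multiplied by `Γ a`. -/
theorem hasSum_one_sub_rpow_neg {a x : ℝ} (ha : 0 < a) (hx0 : 0 < x) (hx1 : x < 1) :
    HasSum (fun j : ℕ => Gamma (a + j) / (j.factorial : ℝ) * x ^ j)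
      (Gamma a * (1 - x) ^ (-a)) := by
  have h := (one_div_one_sub_rpow_hasFPowerSeriesOnBall_zero a).hasSum (y := x)
    (by simpa [← ofReal_norm, abs_of_pos hx0] using hx1)
  have hc (j : ℕ) : Gamma (a + j) / (j.factorial : ℝ) = Gamma a * Ring.choose (a + j - 1) j := by
    have h1 := Ring.factorial_nsmul_multichoose_eq_ascPochhammer a j
    rw [Polynomial.ascPochhammer_smeval_eq_eval, nsmul_eq_mul] at h1
    have h2 : (ascPochhammer ℝ j).eval a = poch a j := by
      clear h1
      induction j with
      | zero => simp [poch]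
      | succ j ih => rw [ascPochhammer_succ_eval, ih, poch_succ]
    rw [Gamma_add_nat ha, ← h2, ← h1, Ring.choose]
    rw [show a + j - 1 - j + 1 = a by ring]
    field_simp
  convert! h.mul_left (Gamma a) using 1
  · funext j
    rw [hc]
    simp [FormalMultilinearSeries.ofScalars]
    ring
  · rw [rpow_neg (by linarith)]
    simp

theorem integrable_beta {u v : ℝ} (hu : 0 < u) (hv : 0 < v) :
    IntegrableOn (fun x : ℝ => x ^ (u - 1) * (1 - x) ^ (v - 1)) (Ioo 0 1) := by
  have h := Complex.betaIntegral_convergent (u := u) (v := v) (by simpa) (by simpa)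
  rw [intervalIntegrable_iff_integrableOn_Ioo_of_le (by simp)] at h
  refine (Integrable.re h).congr ?_
  refine (ae_restrict_iff' measurableSet_Ioo).2 (ae_of_all _ fun x hx => ?_)
  beta_reduce
  norm_cast
  rw [← Complex.ofReal_cpow, ← Complex.ofReal_cpow, RCLike.re_to_complex,
    Complex.re_mul_ofReal, Complex.ofReal_re]
  all_goals linarith [hx.1, hx.2]

theorem integral_beta {u v : ℝ} (hu : 0 < u) (hv : 0 < v) :
    ∫ x in Ioo (0 : ℝ) 1, x ^ (u - 1) * (1 - x) ^ (v - 1) = Gamma u * Gamma v / Gamma (u + v) := by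
  change _ = ProbabilityTheory.beta u v
  rw [ProbabilityTheory.beta_eq_betaIntegralReal u v hu hv, Complex.betaIntegral,
    intervalIntegral.integral_of_le (by norm_num),
    ← integral_Ioc_eq_integral_Ioo, ← RCLike.re_to_complex, ← integral_re]
  · refine setIntegral_congr_fun measurableSet_Ioc fun x ⟨hx1, hx2⟩ ↦ ?_
    norm_cast
    rw [← Complex.ofReal_cpow, ← Complex.ofReal_cpow, RCLike.re_to_complex,
      Complex.re_mul_ofReal, Complex.ofReal_re]
    all_goals linarith
  · have h := Complex.betaIntegral_convergent (u := u) (v := v) (by simpa) (by simpa)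
    rwa [intervalIntegrable_iff_integrableOn_Ioc_of_le (by simp)] at h

/-- **Gauss' theorem** on `₂F₁(a, b; c; 1)` for positive `a`, `b` and `c > a + b`, with each rising
factorial written as a quotient of Gamma values and the constant factor `Γ(c)/(Γ(a)Γ(b))` removed.
The term `Γ(b+j)/Γ(c+j)` is `Γ(c-b)⁻¹` times a Beta integral over `(0,1)`, and summing the binomial
series under the integral leaves another Beta integral. -/
theorem hasSum_gauss {a b c : ℝ} (ha : 0 < a) (hb : 0 < b) (hc : a + b < c) :
    HasSum (fun j : ℕ => Gamma (a + j) * Gamma (b + j) / ((j.factorial : ℝ) * Gamma (c + j)))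
      (Gamma a * Gamma b * Gamma (c - a - b) / (Gamma (c - a) * Gamma (c - b))) := by
  have hcb : 0 < c - b := by linarith
  set F : ℕ → ℝ → ℝ := fun j x =>
    Gamma (a + j) / (j.factorial : ℝ) * (x ^ (b + j - 1) * (1 - x) ^ (c - b - 1)) with hF
  set f : ℝ → ℝ := fun x => Gamma a * (x ^ (b - 1) * (1 - x) ^ (c - a - b - 1)) with hf
  have hsum : ∀ x ∈ Ioo (0 : ℝ) 1, HasSum (fun j => F j x) (f x) := by
    intro x hx
    have h1x : 0 < 1 - x := by linarith [hx.2]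
    convert! (hasSum_one_sub_rpow_neg ha hx.1 hx.2).mul_right
      (x ^ (b - 1) * (1 - x) ^ (c - b - 1)) using 1
    · funext j
      simp only [hF]
      rw [show b + (j : ℝ) - 1 = j + (b - 1) by ring, rpow_add hx.1, rpow_natCast]
      ring
    · simp only [hf]
      rw [show c - a - b - 1 = -a + (c - b - 1) by ring, rpow_add h1x]
      ring
  have hae {P : ℝ → Prop} (h : ∀ x ∈ Ioo (0 : ℝ) 1, P x) :
      ∀ᵐ x ∂(volume.restrict (Ioo (0 : ℝ) 1)), P x :=
    (ae_restrict_iff' measurableSet_Ioo).2 (ae_of_all _ h)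
  have hfi : IntegrableOn f (Ioo 0 1) := (integrable_beta hb (by linarith)).const_mul _
  -- The terms are nonnegative with an integrable sum, so they are their own dominating functions.
  have key := hasSum_integral_of_dominated_convergence (μ := volume.restrict (Ioo (0 : ℝ) 1))
    (F := F) (f := f) F
    (fun j => ((integrable_beta (by positivity) hcb).const_mul _).aestronglyMeasurable)
    (fun j => hae fun x hx => by
      have h1x : 0 < 1 - x := by linarith [hx.2]
      have hx0 := hx.1
      have := Gamma_pos_of_pos (show 0 < a + j by positivity)
      rw [norm_of_nonneg]
      positivity)
    (hae fun x hx => (hsum x hx).summable)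
    (hfi.congr (hae fun x hx => (hsum x hx).tsum_eq.symm))
    (hae hsum)
  have e1 : ∫ x in Ioo (0 : ℝ) 1, f x =
      Gamma a * (Gamma b * Gamma (c - a - b) / Gamma (c - a)) := by
    rw [integral_const_mul, integral_beta hb (by linarith), show b + (c - a - b) = c - a by ring]
  have e2 (j : ℕ) : ∫ x in Ioo (0 : ℝ) 1, F j x =
      Gamma (a + j) / (j.factorial : ℝ) * (Gamma (b + j) * Gamma (c - b) / Gamma (c + j)) := by
    rw [integral_const_mul, integral_beta (by positivity) hcb,
      show b + (j : ℝ) + (c - b) = c + j by ring]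
  simp only [e1, e2] at key
  have h0 := (Gamma_pos_of_pos hcb).ne'
  convert! key.mul_right (Gamma (c - b))⁻¹ using 1
  · funext j
    field_simp
  · field_simp

/-! ### Ratios of Gamma functions -/

/-- Log-convexity of `Γ` on `[x, x+1]` and on `[x+a, x+a+1]` gives
`((x+a)/x)^(a-1) ≤ Γ(x+a)/(Γ(x) x^a) ≤ 1`. -/
theorem tendsto_Gamma_shift_of_lt_one {a : ℝ} (h0 : 0 < a) (h1 : a < 1) :
    Tendsto (fun x => Gamma (x + a) / (Gamma x * x ^ a)) atTop (𝓝 1) := by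
  have hl : Tendsto (fun x : ℝ => ((x + a) / x) ^ (a - 1)) atTop (𝓝 1) := by
    have : Tendsto (fun x : ℝ => 1 + a / x) atTop (𝓝 (1 + 0)) :=
      tendsto_const_nhds.add (tendsto_const_nhds.div_atTop tendsto_id)
    have h2 := (this.rpow_const (p := a - 1) (by norm_num))
    simp only [add_zero, one_rpow] at h2
    refine h2.congr' ?_
    filter_upwards [eventually_gt_atTop 0] with x hx
    congr 1
    field_simp
  refine tendsto_of_tendsto_of_tendsto_of_le_of_le' hl tendsto_const_nhds ?_ ?_
  · filter_upwards [eventually_gt_atTop 0] with x hx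
    have hG := Gamma_pos_of_pos hx
    have hxa : 0 < x + a := by positivity
    have hGa := Gamma_pos_of_pos hxa
    have h := Gamma_mul_add_mul_le_rpow_Gamma_mul_rpow_Gamma (s := x + a) (t := x + a + 1)
      hxa (by positivity) h0 (sub_pos.2 h1) (by ring)
    rw [show a * (x + a) + (1 - a) * (x + a + 1) = x + 1 by ring, Gamma_add_one hx.ne',
      Gamma_add_one hxa.ne', mul_rpow hxa.le hGa.le, mul_left_comm, ← rpow_add hGa] at h
    rw [show a + (1 - a) = 1 by ring, rpow_one] at h
    rw [le_div_iff₀ (by positivity), div_rpow hxa.le hx.le,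
      show a - 1 = -(1 - a) by ring, rpow_neg hxa.le, rpow_neg hx.le]
    have hxx : x ^ (1 - a) * x ^ a = x := by
      rw [← rpow_add hx]; simp
    have hp : 0 < (x + a) ^ (1 - a) := by positivity
    have : ((x + a) ^ (1 - a))⁻¹ / (x ^ (1 - a))⁻¹ * (Gamma x * x ^ a) =
        x * Gamma x / (x + a) ^ (1 - a) := by
      calc _ = (x ^ (1 - a) * x ^ a) * Gamma x / (x + a) ^ (1 - a) := by
            rw [div_inv_eq_mul, div_eq_mul_inv]
            ring
        _ = _ := by rw [hxx]
    rw [this, div_le_iff₀ hp]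
    linarith
  · filter_upwards [eventually_gt_atTop 0] with x hx
    have hG := Gamma_pos_of_pos hx
    have h := Gamma_mul_add_mul_le_rpow_Gamma_mul_rpow_Gamma (s := x) (t := x + 1)
      hx (by positivity) (sub_pos.2 h1) h0 (by ring)
    rw [show (1 - a) * x + a * (x + 1) = x + a by ring, Gamma_add_one hx.ne',
      mul_rpow hx.le hG.le, mul_left_comm, ← rpow_add hG] at h
    rw [show 1 - a + a = 1 by ring, rpow_one] at h
    rw [div_le_one (by positivity)]
    linarith

theorem tendsto_Gamma_shift (a : ℝ) :
    Tendsto (fun x => Gamma (x + a) / (Gamma x * x ^ a)) atTop (𝓝 1) := by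
  have hstep (a : ℝ) : Tendsto (fun x : ℝ => (x + a) / x) atTop (𝓝 1) := by
    have : Tendsto (fun x : ℝ => 1 + a / x) atTop (𝓝 (1 + 0)) :=
      tendsto_const_nhds.add (tendsto_const_nhds.div_atTop tendsto_id)
    rw [add_zero] at this
    refine this.congr' ?_
    filter_upwards [eventually_gt_atTop 0] with x hx
    field_simp
  have hrec (a : ℝ) : ∀ᶠ x in atTop, Gamma (x + (a + 1)) / (Gamma x * x ^ (a + 1)) =
      Gamma (x + a) / (Gamma x * x ^ a) * ((x + a) / x) := by
    filter_upwards [eventually_gt_atTop 0, eventually_gt_atTop (-a)] with x hx hxa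
    have hG := Gamma_pos_of_pos hx
    rw [← add_assoc, Gamma_add_one (by linarith), rpow_add_one hx.ne']
    field_simp
  have hfract : Tendsto (fun x => Gamma (x + Int.fract a) / (Gamma x * x ^ Int.fract a))
      atTop (𝓝 1) := by
    rcases (Int.fract_nonneg a).eq_or_lt with h | h
    · rw [← h]
      refine tendsto_const_nhds.congr' ?_
      filter_upwards [eventually_gt_atTop 0] with x hx
      have hG := Gamma_pos_of_pos hx
      simp [hG.ne']
    · exact tendsto_Gamma_shift_of_lt_one h (Int.fract_lt_one a)
  have hint (n : ℤ) : Tendsto (fun x => Gamma (x + (Int.fract a + n)) /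
      (Gamma x * x ^ (Int.fract a + n))) atTop (𝓝 1) := by
    induction n using Int.induction_on with
    | zero => simpa using hfract
    | succ n ih =>
      have := ih.mul (hstep (Int.fract a + (n : ℤ)))
      rw [mul_one] at this
      refine this.congr' ?_
      filter_upwards [hrec (Int.fract a + (n : ℤ))] with x hx
      rw [← hx]
      push_cast
      simp only [add_assoc]
    | pred n ih =>
      have := ih.div (hstep (Int.fract a + ((-n - 1 : ℤ) : ℝ))) one_ne_zero
      rw [div_one] at this
      refine this.congr' ?_
      filter_upwards [hrec (Int.fract a + ((-n - 1 : ℤ) : ℝ)), eventually_gt_atTop 0,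
        eventually_gt_atTop (-(Int.fract a + ((-n - 1 : ℤ) : ℝ)))] with x hx hx0 hxa
      rw [show (Int.fract a + ((-n : ℤ) : ℝ)) = Int.fract a + ((-n - 1 : ℤ) : ℝ) + 1 by
        push_cast; ring]
      simp only [Pi.div_apply]
      rw [hx]
      have : x + (Int.fract a + ((-n - 1 : ℤ) : ℝ)) ≠ 0 := by linarith
      rw [mul_div_assoc, div_self (by positivity), mul_one]
  simpa [Int.fract_add_floor] using hint ⌊a⌋

theorem tendsto_Gamma_ratio (a b : ℝ) :
    Tendsto (fun x => Gamma (x + a) / Gamma (x + b) * x ^ (b - a)) atTop (𝓝 1) := by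
  have := (tendsto_Gamma_shift a).div (tendsto_Gamma_shift b) one_ne_zero
  rw [div_one] at this
  refine this.congr' ?_
  filter_upwards [eventually_gt_atTop 0, eventually_gt_atTop (-b)] with x hx hxb
  have hG := Gamma_pos_of_pos hx
  have hGb := Gamma_pos_of_pos (show 0 < x + b by linarith)
  simp only [Pi.div_apply]
  rw [rpow_sub hx]
  field_simp

/-! ### Averages along `m + 2j` -/

/-- For nonnegative weights `G m j` of total mass `T m`, the weighted average of `r (m + 2j)` over
`j` tends to the limit of `r`, since every index involved is at least `m`. -/
theorem tendsto_weighted_avg {r : ℕ → ℝ} {R : ℝ} (hr : Tendsto r atTop (𝓝 R))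
    {G : ℕ → ℕ → ℝ} {T : ℕ → ℝ} (hG : ∀ᶠ m in atTop, ∀ j, 0 ≤ G m j)
    (hT : ∀ᶠ m in atTop, 0 < T m) (hGT : ∀ᶠ m in atTop, HasSum (G m) (T m)) :
    Tendsto (fun m => (∑' j, r (m + 2 * j) * G m j) / T m) atTop (𝓝 R) := by
  rw [Metric.tendsto_atTop] at hr
  refine Metric.tendsto_nhds.2 fun ε hε => ?_
  obtain ⟨N, hN⟩ := hr (ε / 2) (by positivity)
  filter_upwards [hG, hT, hGT, eventually_ge_atTop N] with m hG hT hGT hm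
  have hb (j : ℕ) : ‖(r (m + 2 * j) - R) * G m j‖ ≤ ε / 2 * G m j := by
    rw [norm_mul, norm_of_nonneg (hG j)]
    exact mul_le_mul_of_nonneg_right (hN _ (by omega)).le (hG j)
  have hs2 := hGT.mul_left (ε / 2)
  have hs := Summable.of_norm_bounded hs2.summable hb
  have hle := tsum_of_norm_bounded hs2 hb
  have heq : ∑' j, r (m + 2 * j) * G m j = (∑' j, (r (m + 2 * j) - R) * G m j) + R * T m := by
    rw [← (hGT.mul_left R).tsum_eq, ← hs.tsum_add (hGT.mul_left R).summable]
    exact tsum_congr fun j => by ring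
  rw [heq, dist_eq_norm, add_div, mul_div_cancel_right₀ _ hT.ne', add_sub_cancel_right,
    norm_div, norm_of_nonneg hT.le, div_lt_iff₀ hT]
  nlinarith

/-! ### Reduction to a `₂F₁` series -/

/-- The ratio of `Γ(n+α)Γ(n+τ)/(Γ(n+α+ν+τ) n!)`, which is the Schoenberg coefficient up to a constant
factor, to the comparison sequence `Γ(n/2-ν)/Γ(n/2+1)`. -/
noncomputable def gaussRatio (τ α ν : ℝ) (n : ℕ) : ℝ :=
  Gamma (n + α) * Gamma (n + τ) * Gamma ((n : ℝ) / 2 + 1) /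
    (Gamma (n + (α + ν + τ)) * Gamma (n + 1) * Gamma ((n : ℝ) / 2 + -ν))

theorem tendsto_gaussRatio (τ α ν : ℝ) :
    Tendsto (gaussRatio τ α ν) atTop (𝓝 (2 ^ (-1 - ν))) := by
  have hn : Tendsto (fun n : ℕ => (n : ℝ)) atTop atTop := tendsto_natCast_atTop_atTop
  have hn2 : Tendsto (fun n : ℕ => (n : ℝ) / 2) atTop atTop := hn.atTop_div_const two_pos
  have h := ((((tendsto_Gamma_ratio α (α + ν + τ)).comp hn).mul
    ((tendsto_Gamma_ratio τ 1).comp hn)).mul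
    ((tendsto_Gamma_ratio 1 (-ν)).comp hn2)).mul_const ((2 : ℝ) ^ (-1 - ν))
  simp only [one_mul] at h
  refine h.congr' ?_
  filter_upwards [eventually_gt_atTop 0] with n hn0
  have hp : (0 : ℝ) < n := by exact_mod_cast hn0
  have e : (n : ℝ) ^ (α + ν + τ - α) * (n : ℝ) ^ (1 - τ) *
      ((n : ℝ) / 2) ^ (-ν - 1) * (2 : ℝ) ^ (-1 - ν) = 1 := by
    rw [div_rpow hp.le two_pos.le, show -1 - ν = -ν - 1 by ring, mul_assoc,
      div_mul_cancel₀ _ (by positivity), ← rpow_add hp, ← rpow_add hp]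
    convert! rpow_zero _ using 2
    ring
  simp only [Function.comp_apply]
  trans gaussRatio τ α ν n * ((n : ℝ) ^ (α + ν + τ - α) * (n : ℝ) ^ (1 - τ) *
      ((n : ℝ) / 2) ^ (-ν - 1) * (2 : ℝ) ^ (-1 - ν))
  · simp only [gaussRatio, div_eq_mul_inv, mul_inv]
    ring
  · rw [e, mul_one]

/-- The `j`-th term of the series of `hasSum_gauss` with `a = m/2 + 1/2`, `b = m/2 - ν`,
`c = m + (d+1)/2`; one has `b > 0` only for `m > 2ν`. -/
noncomputable def gaussTerm (ν : ℝ) (d m j : ℕ) : ℝ :=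
  Gamma (((m : ℝ) / 2 + 1 / 2) + j) * Gamma (((m : ℝ) / 2 + -ν) + j) /
    ((j.factorial : ℝ) * Gamma ((m : ℝ) + ((d : ℝ) + 1) / 2 + j))

/-- The sum of `gaussTerm ν d m` over `j` when `m > 2ν`. -/
noncomputable def gaussValue (ν : ℝ) (d m : ℕ) : ℝ :=
  Gamma ((m : ℝ) / 2 + 1 / 2) * Gamma ((m : ℝ) / 2 + -ν) * Gamma ((d : ℝ) / 2 + ν) /
    (Gamma ((m : ℝ) / 2 + (d : ℝ) / 2) * Gamma ((m : ℝ) / 2 + (((d : ℝ) + 1) / 2 + ν)))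

theorem hasSum_gaussTerm {ν : ℝ} (hν : 0 < ν) (d : ℕ) {m : ℕ} (hm : 2 * ν < m) :
    HasSum (gaussTerm ν d m) (gaussValue ν d m) := by
  have h := hasSum_gauss (a := (m : ℝ) / 2 + 1 / 2) (b := (m : ℝ) / 2 + -ν)
    (c := (m : ℝ) + ((d : ℝ) + 1) / 2) (by positivity) (by linarith)
    (by have : (0 : ℝ) ≤ d := by positivity
        linarith)
  convert! h using 1
  rw [gaussValue]
  congr 3 <;> ring

theorem gaussTerm_nonneg {ν : ℝ} (d : ℕ) {m : ℕ} (hm : 2 * ν < m) (j : ℕ) :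
    0 ≤ gaussTerm ν d m j := by
  have h1 : 0 < Gamma ((m : ℝ) / 2 + 1 / 2 + j) := Gamma_pos_of_pos (by positivity)
  have h2 : 0 < Gamma ((m : ℝ) / 2 + -ν + j) := Gamma_pos_of_pos (by
    have : (0 : ℝ) ≤ j := by positivity
    linarith)
  have h3 : 0 < Gamma ((m : ℝ) + ((d : ℝ) + 1) / 2 + j) := Gamma_pos_of_pos (by positivity)
  rw [gaussTerm]
  positivity

theorem gaussValue_pos {ν : ℝ} (hν : 0 < ν) (d : ℕ) {m : ℕ} (hm : 2 * ν < m) :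
    0 < gaussValue ν d m := by
  have hm0 : (0 : ℝ) < m := by linarith
  have h1 : 0 < Gamma ((m : ℝ) / 2 + 1 / 2) := Gamma_pos_of_pos (by positivity)
  have h2 : 0 < Gamma ((m : ℝ) / 2 + -ν) := Gamma_pos_of_pos (by linarith)
  have h3 : 0 < Gamma ((d : ℝ) / 2 + ν) := Gamma_pos_of_pos (by positivity)
  have h4 : 0 < Gamma ((m : ℝ) / 2 + (d : ℝ) / 2) := Gamma_pos_of_pos (by positivity)
  have h5 : 0 < Gamma ((m : ℝ) / 2 + (((d : ℝ) + 1) / 2 + ν)) := Gamma_pos_of_pos (by positivity)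
  rw [gaussValue]
  positivity

/-- The factor, depending on `m` and `d` only, that `Cmd` and `Smd` contribute in front of the
`₂F₁` series. -/
noncomputable def prefactor (d m : ℕ) : ℝ :=
  Gamma ((m : ℝ) + ((d : ℝ) - 1)) * (m + ((d : ℝ) - 1) / 2) * 4 /
    (Gamma ((m : ℝ) + 1) * 2 ^ d * Gamma ((d : ℝ) / 2))

/-- Term by term, the `₄F₃` series is a `₂F₁` series weighted by `gaussRatio` at `m + 2j`. The
hypothesis `2ν < m` keeps `Γ(m/2 - ν + j)`, which cancels between the two factors, nonzero. -/
theorem Cmd_mul_term {τ α ν : ℝ} (hτ : 0 < τ) (hα : 0 < α) (hν : 0 < ν)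
    {d : ℕ} (hd : 2 ≤ d) {m : ℕ} (hm : 2 * ν < m) (j : ℕ) :
    Cmd τ α ν d m *
      (poch ((α + m) / 2) j * poch ((α + m + 1) / 2) j * poch ((τ + m) / 2) j *
        poch ((τ + m + 1) / 2) j /
      (poch ((α + ν + τ + m) / 2) j * poch ((α + ν + τ + m + 1) / 2) j *
        poch ((m : ℝ) + ((d : ℝ) + 1) / 2) j * (Nat.factorial j : ℝ))) =
    Gamma (ν + α) * Gamma (ν + τ) / (Gamma α * Gamma ν * Gamma τ) * prefactor d m *
      (gaussRatio τ α ν (m + 2 * j) * gaussTerm ν d m j) := by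
  have hd' : (2 : ℝ) ≤ d := by exact_mod_cast hd
  have hm0 : (0 : ℝ) < m := by linarith
  have hs : 0 < α + ν + τ := by positivity
  have hP {x : ℝ} (hx : 0 < x) (n : ℕ) : poch x n = Gamma (x + n) / Gamma x := by
    rw [Gamma_add_nat hx]
    have := Gamma_pos_of_pos hx
    field_simp
  have h2 {x : ℝ} (hx : 0 < x) : poch ((x + m) / 2) j * poch ((x + m + 1) / 2) j =
      Gamma (((m + 2 * j : ℕ) : ℝ) + x) / Gamma (x + m) / 4 ^ j := by
    rw [poch_half_mul, hP (by positivity)]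
    push_cast
    congr 3
    ring
  have hc : (m : ℝ) + ((d : ℝ) + 1) / 2 = (m + ((d : ℝ) - 1) / 2) + 1 := by ring
  have hc0 : 0 < (m : ℝ) + ((d : ℝ) - 1) / 2 := by linarith
  have hGc : Gamma ((m : ℝ) + ((d : ℝ) + 1) / 2) =
      (m + ((d : ℝ) - 1) / 2) * Gamma (m + ((d : ℝ) - 1) / 2) := by
    rw [hc, Gamma_add_one hc0.ne']
  -- Legendre duplication at `(m + 2j + 1) / 2`.
  have hleg : Gamma (((m + 2 * j : ℕ) : ℝ) + 1) * √π = 2 ^ m * 4 ^ j *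
      (Gamma (((m : ℝ) / 2 + 1 / 2) + j) * Gamma (((m + 2 * j : ℕ) : ℝ) / 2 + 1)) := by
    have h := Gamma_mul_Gamma_add_half_of_pos (s := ((m : ℝ) / 2 + 1 / 2) + j) (by positivity)
    rw [show (m : ℝ) / 2 + 1 / 2 + j + 1 / 2 = ((m + 2 * j : ℕ) : ℝ) / 2 + 1 by push_cast; ring,
      show 2 * ((m : ℝ) / 2 + 1 / 2 + j) = ((m + 2 * j : ℕ) : ℝ) + 1 by push_cast; ring,
      show 1 - (((m + 2 * j : ℕ) : ℝ) + 1) = -((m + 2 * j : ℕ) : ℝ) by ring,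
      rpow_neg two_pos.le, rpow_natCast, pow_add, pow_mul] at h
    rw [h]
    norm_num
    field_simp
  have hpow : (2 : ℝ) ^ ((m : ℝ) + d - 2) = 2 ^ m * 2 ^ d / 4 := by
    rw [rpow_sub two_pos, rpow_add two_pos, rpow_natCast, rpow_natCast]
    norm_num
  have hb : ((m + 2 * j : ℕ) : ℝ) / 2 + -ν = (m : ℝ) / 2 + -ν + j := by push_cast; ring
  have hterm : poch ((α + m) / 2) j * poch ((α + m + 1) / 2) j * poch ((τ + m) / 2) j *
        poch ((τ + m + 1) / 2) j /
      (poch ((α + ν + τ + m) / 2) j * poch ((α + ν + τ + m + 1) / 2) j *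
        poch ((m : ℝ) + ((d : ℝ) + 1) / 2) j * (Nat.factorial j : ℝ)) =
      (Gamma (((m + 2 * j : ℕ) : ℝ) + α) / Gamma (α + m) / 4 ^ j) *
      (Gamma (((m + 2 * j : ℕ) : ℝ) + τ) / Gamma (τ + m) / 4 ^ j) /
      ((Gamma (((m + 2 * j : ℕ) : ℝ) + (α + ν + τ)) / Gamma (α + ν + τ + m) / 4 ^ j) *
        (Gamma ((m : ℝ) + ((d : ℝ) + 1) / 2 + j) /
          ((m + ((d : ℝ) - 1) / 2) * Gamma (m + ((d : ℝ) - 1) / 2))) * (Nat.factorial j : ℝ)) := by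
    rw [← h2 hα, ← h2 hτ, ← h2 hs, ← hGc, ← hP (by linarith), mul_assoc (_ * _)]
  rw [hterm]
  have hj := Nat.factorial_pos j
  have g1 := Gamma_pos_of_pos hτ
  have g2 := Gamma_pos_of_pos hα
  have g3 := Gamma_pos_of_pos hs
  have g4 := Gamma_pos_of_pos hν
  have g5 := Gamma_pos_of_pos (add_pos hν hα)
  have g6 : 0 < Gamma ((m : ℝ) / 2 + -ν + j) := Gamma_pos_of_pos (by
    have : (0 : ℝ) ≤ j := by positivity
    linarith)
  have g7 : 0 < Gamma (α + m) := Gamma_pos_of_pos (by positivity)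
  have g8 : 0 < Gamma (τ + m) := Gamma_pos_of_pos (by positivity)
  have g9 : 0 < Gamma (α + ν + τ + m) := Gamma_pos_of_pos (by positivity)
  have g10 : 0 < Gamma ((m : ℝ) + ((d : ℝ) - 1) / 2) := Gamma_pos_of_pos hc0
  have g11 : 0 < Gamma ((m : ℝ) / 2 + 1 / 2 + j) := Gamma_pos_of_pos (by positivity)
  have g12 : 0 < Gamma (((m + 2 * j : ℕ) : ℝ) + 1) := Gamma_pos_of_pos (by positivity)
  have g13 : 0 < Gamma ((d : ℝ) / 2) := Gamma_pos_of_pos (by positivity)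
  have g14 : 0 < Gamma (((m + 2 * j : ℕ) : ℝ) + (α + ν + τ)) := Gamma_pos_of_pos (by positivity)
  have g15 : 0 < Gamma ((m : ℝ) + ((d : ℝ) + 1) / 2 + j) := Gamma_pos_of_pos (by positivity)
  have g16 : 0 < Gamma ((m : ℝ) + 1) := Gamma_pos_of_pos (by positivity)
  have hE : Gamma (((m + 2 * j : ℕ) : ℝ) / 2 + 1) =
      Gamma (((m + 2 * j : ℕ) : ℝ) + 1) * √π / (2 ^ m * 4 ^ j *
        Gamma (((m : ℝ) / 2 + 1 / 2) + j)) := by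
    rw [hleg]
    field_simp
  have hB1 : betaFn α ν = Gamma α * Gamma ν / Gamma (ν + α) := by rw [betaFn, add_comm α ν]
  have hB2 : betaFn α (ν + τ) = Gamma α * Gamma (ν + τ) / Gamma (α + ν + τ) := by
    rw [betaFn, add_assoc]
  have hd1 : (m : ℝ) + d - 1 = m + ((d : ℝ) - 1) := by ring
  simp only [Cmd, schoenbergF, hB1, hB2, gaussRatio, gaussTerm, prefactor, hP hτ, hP hα, hP hs,
    ← Gamma_nat_eq_factorial m, hpow, hb, hE, hd1]
  clear hE hleg
  -- Otherwise `field_simp` normalizes the arguments of these Gamma values inconsistently.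
  generalize Gamma (((m + 2 * j : ℕ) : ℝ) + 1) = X1 at *
  generalize Gamma ((m : ℝ) / 2 + -ν + j) = X2 at *
  generalize Gamma ((m : ℝ) / 2 + 1 / 2 + j) = X3 at *
  generalize Gamma ((m : ℝ) + ((d : ℝ) - 1) / 2) = X4 at *
  field_simp

/-! ### Asymptotics of the closed form -/

theorem tendsto_prefactor_mul_gaussValue (ν : ℝ) {d : ℕ} (hd : 2 ≤ d) (hν : 0 < ν) :
    Tendsto (fun m : ℕ => prefactor d m * gaussValue ν d m /
      (2 ^ (2 * ν + 2) * Gamma ((d : ℝ) / 2 + ν) / Gamma ((d : ℝ) / 2) *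
        (m : ℝ) ^ (-(1 + 2 * ν)))) atTop (𝓝 1) := by
  have hn : Tendsto (fun n : ℕ => (n : ℝ)) atTop atTop := tendsto_natCast_atTop_atTop
  have hn2 : Tendsto (fun n : ℕ => (n : ℝ) / 2) atTop atTop := hn.atTop_div_const two_pos
  have hlin : Tendsto (fun m : ℕ => 1 + ((d : ℝ) - 1) / 2 / (m : ℝ)) atTop (𝓝 1) := by
    simpa using tendsto_const_nhds.add
      ((tendsto_const_nhds (x := ((d : ℝ) - 1) / 2)).div_atTop hn)
  have h := ((((tendsto_Gamma_ratio ((d : ℝ) - 1) 1).comp hn).mul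
    ((tendsto_Gamma_ratio (1 / 2) ((d : ℝ) / 2)).comp hn2)).mul
    ((tendsto_Gamma_ratio (-ν) (((d : ℝ) + 1) / 2 + ν)).comp hn2)).mul hlin
  simp only [one_mul] at h
  refine h.congr' ?_
  filter_upwards [eventually_gt_atTop 0] with m hm
  have hp : (0 : ℝ) < m := by exact_mod_cast hm
  have g1 : 0 < Gamma ((d : ℝ) / 2 + ν) := Gamma_pos_of_pos (by positivity)
  have g2 : 0 < Gamma ((d : ℝ) / 2) := Gamma_pos_of_pos (by positivity)
  -- The powers of `m` and `m/2` normalizing the three Gamma ratios multiply to the claimed power of `m`,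
  -- up to a constant.
  have e : (m : ℝ) ^ (1 - ((d : ℝ) - 1)) * ((m : ℝ) / 2) ^ ((d : ℝ) / 2 - 1 / 2) *
      ((m : ℝ) / 2) ^ (((d : ℝ) + 1) / 2 + ν - -ν) =
      m * 4 / 2 ^ d / (2 ^ (2 * ν + 2) * (m : ℝ) ^ (-(1 + 2 * ν))) := by
    have e1 : ((m : ℝ) / 2) ^ ((d : ℝ) / 2 - 1 / 2) *
        ((m : ℝ) / 2) ^ (((d : ℝ) + 1) / 2 + ν - -ν) =
        (m : ℝ) ^ (d + 2 * ν) / (2 ^ d * 2 ^ (2 * ν)) := by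
      rw [← rpow_add (by positivity), div_rpow hp.le two_pos.le, ← rpow_natCast,
        ← rpow_add two_pos]
      congr 2 <;> ring
    have e2 : (m : ℝ) ^ (1 - ((d : ℝ) - 1)) * (m : ℝ) ^ (d + 2 * ν) * (m : ℝ) ^ (-(1 + 2 * ν)) =
        m := by
      rw [← rpow_add hp, ← rpow_add hp]
      convert! rpow_one _ using 2
      ring
    have e3 : (2 : ℝ) ^ (2 * ν + 2) = 2 ^ (2 * ν) * 4 := by
      rw [rpow_add two_pos]
      norm_num
    rw [mul_assoc, e1, e3, eq_div_iff (by positivity)]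
    nth_rewrite 4 [← e2]
    field_simp
  have hl : 1 + ((d : ℝ) - 1) / 2 / (m : ℝ) = (m + ((d : ℝ) - 1) / 2) / m := by field_simp
  simp only [Function.comp_apply]
  rw [hl]
  trans Gamma (m + ((d : ℝ) - 1)) / Gamma (m + 1) *
      (Gamma ((m : ℝ) / 2 + 1 / 2) / Gamma ((m : ℝ) / 2 + (d : ℝ) / 2)) *
      (Gamma ((m : ℝ) / 2 + -ν) / Gamma ((m : ℝ) / 2 + (((d : ℝ) + 1) / 2 + ν))) *
      ((m + ((d : ℝ) - 1) / 2) / m) *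
      ((m : ℝ) ^ (1 - ((d : ℝ) - 1)) * ((m : ℝ) / 2) ^ ((d : ℝ) / 2 - 1 / 2) *
      ((m : ℝ) / 2) ^ (((d : ℝ) + 1) / 2 + ν - -ν))
  · ring
  · rw [e]
    simp only [prefactor, gaussValue]
    field_simp

end Helpers


theorem stmt2 (τ α ν : ℝ) (hτ : 0 < τ) (hα : 0 < α) (hν : 0 < ν)
    (d : ℕ) (hd : 2 ≤ d) :
    Tendsto (fun m : ℕ =>
      (Cmd τ α ν d m * Smd τ α ν d m) /
        ((Real.Gamma (ν + α) * Real.Gamma (ν + τ) /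
            (Real.Gamma α * Real.Gamma ν * Real.Gamma τ)) *
          ((2 : ℝ) ^ (ν + 1) * Real.Gamma ((d : ℝ) / 2 + ν) / Real.Gamma ((d : ℝ) / 2)) *
          (m : ℝ) ^ (-(1 + 2 * ν))))
      atTop (nhds 1) := by
  have hK : 0 < Real.Gamma (ν + α) * Real.Gamma (ν + τ) /
      (Real.Gamma α * Real.Gamma ν * Real.Gamma τ) := by
    have g1 := Real.Gamma_pos_of_pos hτ
    have g2 := Real.Gamma_pos_of_pos hα
    have g3 := Real.Gamma_pos_of_pos hν
    have g4 := Real.Gamma_pos_of_pos (add_pos hν hα)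
    have g5 := Real.Gamma_pos_of_pos (add_pos hν hτ)
    positivity
  have hlarge : ∀ᶠ m : ℕ in atTop, 2 * ν < (m : ℝ) :=
    tendsto_natCast_atTop_atTop.eventually_gt_atTop _
  have hval : ∀ᶠ m : ℕ in atTop, 0 < gaussValue ν d m :=
    hlarge.mono fun m hm => gaussValue_pos hν d hm
  have havg := tendsto_weighted_avg (tendsto_gaussRatio τ α ν)
    (hlarge.mono fun m hm => gaussTerm_nonneg d hm) hval
    (hlarge.mono fun m hm => hasSum_gaussTerm hν d hm)
  have h := (havg.mul (tendsto_prefactor_mul_gaussValue ν hd hν)).mul_const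
    ((2 : ℝ) ^ (1 + ν))
  have e1 : (2 : ℝ) ^ (-1 - ν) * 1 * 2 ^ (1 + ν) = 1 := by
    rw [mul_one, ← Real.rpow_add two_pos]
    convert! Real.rpow_zero _ using 2
    ring
  rw [e1] at h
  refine h.congr' ?_
  filter_upwards [hlarge, hval] with m hm hT
  have hC : Cmd τ α ν d m * Smd τ α ν d m =
      Real.Gamma (ν + α) * Real.Gamma (ν + τ) / (Real.Gamma α * Real.Gamma ν * Real.Gamma τ) *
        prefactor d m * ∑' j, gaussRatio τ α ν (m + 2 * j) * gaussTerm ν d m j := by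
    rw [Smd, ← tsum_mul_left, ← tsum_mul_left]
    exact tsum_congr fun j => Cmd_mul_term hτ hα hν hd hm j
  have e2 : (2 : ℝ) ^ (2 * ν + 2) = 2 ^ (ν + 1) * 2 ^ (1 + ν) := by
    rw [← Real.rpow_add two_pos]
    congr 1
    ring
  have hp : (0 : ℝ) < m := by linarith
  rw [hC, e2]
  generalize Real.Gamma (ν + α) * Real.Gamma (ν + τ) /
    (Real.Gamma α * Real.Gamma ν * Real.Gamma τ) = K at hK ⊢
  have h2 : (0 : ℝ) < 2 ^ (1 + ν) := by positivity
  generalize (2 : ℝ) ^ (1 + ν) = Q at h2 ⊢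
  field_simp
end

section
/- Let d ≥ 2 be an integer, let α > 0, and let ν > 0 with ν not an integer. For m ≥ 0 define b_m = (2π)^{d/2} · (2^{d/2} Γ(ν+d/2)/(Γ(ν) α^{2ν})) · (Γ(m−ν) κ_{m,d} / Γ(m+ν+d)) · ₁F₂(ν+d/2; ν+1−m, m+ν+d; 1/α²) + (2 π^{(d+3)/2}/Γ(ν)) · ((−1)^m κ_{m,d} / (Γ(m+1−ν) Γ(m+(d+1)/2) (2α)^m)) · ₁F₂(m+d/2; m−ν+1, 2m+d; 1/α²). Then b_m ~ (2/α^{2ν}) · (Γ(ν+d/2)/(Γ(ν) Γ(d/2))) · m^{−(1+2ν)} as m → ∞. (This is the asymptotic decay of the d-Schoenberg coefficients of the spherical Matérn family.) -/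
/-! The first summand of the coefficient carries the asymptotics and the second one is negligible.

* Both `₁F₂` factors tend to `1`. The ratio of consecutive terms of either series is at most `C / m`
  uniformly in the index, so the series is `1` plus a geometric tail (`hyp1F2_sub_one_le`). In the
  first series the parameter `ν + 1 - m` is negative, but its shifts by integers stay at distance at
  least `|ν - round ν| > 0` from `0`.
* Gauss's product for `Γ` gives `Γ(m + s) ~ m ^ s * m! / m` (`tendsto_gammaRatio`). Hence
  the first prefactor is a constant times `m ^ (-(1 + 2ν))`, and Legendre's duplication formula
  identifies the constant. Relative to that power, the second prefactor is
  `O(m ^ q * (2α) ^ (-m) / (m!) ^ 2)` for a fixed exponent `q`. -/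

open scoped Real BigOperators
open Filter

/-- The constant `κ_{m,d}`. -/
noncomputable def kappaMD (d m : ℕ) : ℝ :=
  Real.Gamma (((d : ℝ) + 1) / 2) / (2 * π ^ (((d : ℝ) + 1) / 2) * Real.Gamma (d : ℝ)) *
    ((2 * (m : ℝ) + d - 1) * Real.Gamma ((m : ℝ) + d - 1) / (Nat.factorial m : ℝ))

/-- The hypergeometric function `₁F₂(a; b, c; z)`. -/
noncomputable def hyp1F2 (a b c z : ℝ) : ℝ :=
  ∑' j : ℕ, poch a j * z ^ j / (poch b j * poch c j * (Nat.factorial j : ℝ))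

/-- The `d`-Schoenberg coefficients of the spherical Matérn family. -/
noncomputable def maternCoef (d : ℕ) (α ν : ℝ) (m : ℕ) : ℝ :=
  (2 * π) ^ ((d : ℝ) / 2) *
      ((2 : ℝ) ^ ((d : ℝ) / 2) * Real.Gamma (ν + (d : ℝ) / 2) /
        (Real.Gamma ν * α ^ (2 * ν))) *
      (Real.Gamma ((m : ℝ) - ν) * kappaMD d m / Real.Gamma ((m : ℝ) + ν + d)) *
      hyp1F2 (ν + (d : ℝ) / 2) (ν + 1 - m) ((m : ℝ) + ν + d) (1 / α ^ 2) +
    (2 * π ^ (((d : ℝ) + 3) / 2) / Real.Gamma ν) *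
      ((-1 : ℝ) ^ m * kappaMD d m /
        (Real.Gamma ((m : ℝ) + 1 - ν) * Real.Gamma ((m : ℝ) + ((d : ℝ) + 1) / 2) *
          (2 * α) ^ m)) *
      hyp1F2 ((m : ℝ) + (d : ℝ) / 2) ((m : ℝ) - ν + 1) (2 * (m : ℝ) + d) (1 / α ^ 2)

/-! ### Asymptotics of `Γ(m + s)` -/

/-- The functional equation of `Γ`, iterated; `hs` keeps every step off the poles, where Mathlib's
`Real.Gamma` has the junk value `0`. -/
lemma poch_mul_Gamma (s : ℝ) (hs : ∀ j : ℕ, s + j ≠ 0) (n : ℕ) :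
    poch s n * Real.Gamma s = Real.Gamma (s + n) := by
  induction n with
  | zero => simp [poch]
  | succ n ih =>
    have h : poch s (n + 1) = poch s n * (s + n) := by
      simp [poch, Finset.prod_range_succ]
    rw [h, Nat.cast_succ, ← add_assoc, Real.Gamma_add_one (hs n), ← ih]
    ring

/-- `Γ(m + s)` divided by its asymptotic equivalent `m ^ s * m! / m`. -/
noncomputable def gammaRatio (s : ℝ) (m : ℕ) : ℝ :=
  Real.Gamma ((m : ℝ) + s) * m / ((m : ℝ) ^ s * (m.factorial : ℝ))

lemma tendsto_add_div (k c : ℝ) :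
    Tendsto (fun m : ℕ => (k * (m : ℝ) + c) / m) atTop (nhds k) := by
  have h := (tendsto_const_div_atTop_nhds_zero_nat c).const_add k
  rw [add_zero] at h
  refine h.congr' ?_
  filter_upwards [eventually_gt_atTop 0] with m hm
  have : (m : ℝ) ≠ 0 := by positivity
  field_simp

/-- A rearrangement of Gauss's limit `m ^ s * m! / (s)_{m+1} → Γ(s)`. -/
lemma tendsto_gammaRatio (s : ℝ) (hs : ∀ j : ℕ, s + j ≠ 0) :
    Tendsto (gammaRatio s) atTop (nhds 1) := by
  have hG : Real.Gamma s ≠ 0 := Real.Gamma_ne_zero fun j hj => hs j (by rw [hj]; ring)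
  have h1 := (Real.GammaSeq_tendsto_Gamma s).div_const (Real.Gamma s)
  rw [div_self hG] at h1
  have h2 := (h1.mul (tendsto_add_div 1 s)).inv₀ (by norm_num)
  rw [mul_one, inv_one] at h2
  refine h2.congr' ?_
  filter_upwards [eventually_gt_atTop 0] with m hm
  have hm' : (0 : ℝ) < m := by exact_mod_cast hm
  have hp := poch_mul_Gamma s hs m
  have hp0 : poch s m ≠ 0 := Finset.prod_ne_zero_iff.2 fun i _ => hs i
  have hsm := hs m
  have hpow : (m : ℝ) ^ s ≠ 0 := (Real.rpow_pos_of_pos hm' s).ne'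
  have hf : (m.factorial : ℝ) ≠ 0 := by positivity
  have hprod : (∏ j ∈ Finset.range (m + 1), (s + (j : ℝ))) = poch s m * (s + m) := by
    simp [poch, Finset.prod_range_succ]
  rw [Real.GammaSeq, gammaRatio, hprod, add_comm (m : ℝ) s, ← hp]
  rw [show 1 * (m : ℝ) + s = s + m by ring]
  field_simp

/-! ### The hypergeometric factors -/

/-- If the ratios of consecutive terms are bounded by `r ≤ 1/2`, the series differs from its
leading term `1` by at most the geometric tail `r / (1 - r) ≤ 2 * r`. -/
lemma hyp1F2_sub_one_le (a b c z r : ℝ) (hr : r ≤ 1 / 2)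
    (h : ∀ i : ℕ, |(a + i) * z / ((b + i) * (c + i) * (i + 1))| ≤ r) :
    |hyp1F2 a b c z - 1| ≤ 2 * r := by
  have hr0 : 0 ≤ r := (abs_nonneg _).trans (h 0)
  set t : ℕ → ℝ := fun j => poch a j * z ^ j / (poch b j * poch c j * (Nat.factorial j : ℝ))
    with ht
  have hstep : ∀ j, t (j + 1) = t j * ((a + j) * z / ((b + j) * (c + j) * (j + 1))) := by
    intro j
    simp only [ht, poch, Finset.prod_range_succ, Nat.factorial_succ, pow_succ, Nat.cast_mul,
      Nat.cast_succ, div_mul_div_comm]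
    congr 1 <;> ring
  have hb : ∀ j, |t j| ≤ r ^ j := by
    intro j
    induction j with
    | zero => simp [ht, poch]
    | succ j ih =>
      rw [hstep, abs_mul, pow_succ]
      exact mul_le_mul ih (h j) (abs_nonneg _) (by positivity)
  have hgeo := hasSum_geometric_of_lt_one hr0 (by linarith : r < 1)
  have hsum : Summable t := Summable.of_norm_bounded hgeo.summable hb
  have hF : hyp1F2 a b c z - 1 = ∑' j, t (j + 1) := by
    have h0 : t 0 = 1 := by simp [ht, poch]
    have := hsum.tsum_eq_zero_add
    rw [h0] at this
    rw [← add_sub_cancel_left 1 (∑' j, t (j + 1)), ← this]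
    rfl
  rw [hF]
  have hle : ‖∑' j, t (j + 1)‖ ≤ r * (1 - r)⁻¹ := by
    refine tsum_of_norm_bounded (hgeo.mul_left r) fun j => ?_
    rw [← pow_succ']
    exact hb (j + 1)
  have hinv : (1 - r)⁻¹ ≤ 2 := by
    rw [inv_le_comm₀ (by linarith) (by norm_num)]
    linarith
  rw [Real.norm_eq_abs] at hle
  nlinarith

lemma tendsto_hyp1F2_one (a b c : ℕ → ℝ) (z C : ℝ)
    (h : ∀ᶠ m : ℕ in atTop, ∀ i : ℕ,
      |(a m + i) * z / ((b m + i) * (c m + i) * (i + 1))| ≤ C / m) :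
    Tendsto (fun m => hyp1F2 (a m) (b m) (c m) z) atTop (nhds 1) := by
  have hC := tendsto_const_div_atTop_nhds_zero_nat C
  rw [tendsto_iff_norm_sub_tendsto_zero]
  have h2 := hC.const_mul 2
  rw [mul_zero] at h2
  refine squeeze_zero' (Eventually.of_forall fun _ => norm_nonneg _) ?_ h2
  filter_upwards [h, hC.eventually_le_const (by norm_num : (0 : ℝ) < 1 / 2)] with m hm hm2
  exact hyp1F2_sub_one_le _ _ _ _ _ hm2 hm

lemma tendsto_hyp_first (a ν e z : ℝ) (ha : 0 < a) (hν : 0 < ν) (he : 0 ≤ e) (hz : 0 < z)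
    (hνint : ∀ n : ℤ, ν ≠ (n : ℝ)) :
    Tendsto (fun m : ℕ => hyp1F2 a (ν + 1 - m) ((m : ℝ) + ν + e) z) atTop (nhds 1) := by
  have hδ : 0 < |ν - round ν| := abs_pos.2 (sub_ne_zero.2 (hνint _))
  refine tendsto_hyp1F2_one _ _ _ z ((a + 1) * z / |ν - round ν|) ?_
  filter_upwards [eventually_gt_atTop 0] with m hm i
  have hm' : (0 : ℝ) < m := by exact_mod_cast hm
  have hi : (0 : ℝ) ≤ i := i.cast_nonneg
  -- `ν + 1 - m + i` is the difference of `ν` and an integer.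
  have hb : |ν - round ν| ≤ |ν + 1 - m + i| := by
    have := round_le ν ((m : ℤ) - 1 - i)
    rwa [show ν - (((m : ℤ) - 1 - i : ℤ) : ℝ) = ν + 1 - m + i by push_cast; ring] at this
  rw [abs_div, abs_mul, abs_mul, abs_mul, abs_of_pos hz, abs_of_pos (by positivity : 0 < a + i),
    abs_of_pos (by positivity : 0 < (m : ℝ) + ν + e + i), abs_of_pos (by positivity : 0 < (i : ℝ) + 1),
    div_div]
  have h1 : a + i ≤ (a + 1) * (i + 1) := by nlinarith
  calc (a + i) * z / (|ν + 1 - m + i| * (m + ν + e + i) * (i + 1))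
      ≤ ((a + 1) * (i + 1)) * z / (|ν - round ν| * m * (i + 1)) := by
        gcongr
        linarith
    _ = _ := by field_simp

/-- The term ratio is at most `2 * z / m`: the factor `2 * m + e + i` dominates the numerator
and, once `m ≥ 2 * ν`, the factor `m - ν + 1 + i` is at least `m / 2`. -/
lemma tendsto_hyp_second (e ν z : ℝ) (he : 0 ≤ e) (hz : 0 < z) :
    Tendsto (fun m : ℕ => hyp1F2 ((m : ℝ) + e / 2) ((m : ℝ) - ν + 1) (2 * (m : ℝ) + e) z)
      atTop (nhds 1) := by
  refine tendsto_hyp1F2_one _ _ _ z (2 * z) ?_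
  filter_upwards [eventually_gt_atTop 0,
    tendsto_natCast_atTop_atTop.eventually_ge_atTop (2 * ν)] with m hm hmν i
  have hm' : (0 : ℝ) < m := by exact_mod_cast hm
  have hi : (0 : ℝ) ≤ i := i.cast_nonneg
  have hb : (m : ℝ) / 2 ≤ m - ν + 1 + i := by linarith
  have hb0 : (0 : ℝ) < m - ν + 1 + i := by linarith
  rw [abs_of_pos (by positivity)]
  calc (m + e / 2 + i) * z / ((m - ν + 1 + i) * (2 * m + e + i) * (i + 1))
      ≤ (2 * m + e + i) * z / ((m / 2) * (2 * m + e + i) * 1) := by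
        gcongr <;> linarith
    _ = _ := by field_simp

/-! ### The prefactors -/

lemma tendsto_rpow_mul_pow_div_factorial_sq (q x : ℝ) :
    Tendsto (fun m : ℕ => (m : ℝ) ^ q * x ^ m / ((m.factorial : ℝ) * m.factorial))
      atTop (nhds 0) := by
  have h1 := (tendsto_rpow_mul_exp_neg_mul_atTop_nhds_zero q 1 one_pos).comp
    (tendsto_natCast_atTop_atTop (R := ℝ))
  have h2 := FloorSemiring.tendsto_pow_div_factorial_atTop (Real.exp 1 * x)
  have h3 := FloorSemiring.tendsto_pow_div_factorial_atTop (1 : ℝ)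
  have h := (h1.mul h2).mul h3
  simp only [mul_zero] at h
  refine h.congr fun m => ?_
  have hf : (m.factorial : ℝ) ≠ 0 := by positivity
  have he : Real.exp (-1 * (m : ℝ)) * Real.exp 1 ^ m = 1 := by
    rw [← Real.exp_nat_mul, ← Real.exp_add]
    simp
  simp only [Function.comp, one_pow, mul_pow]
  calc _ = (Real.exp (-1 * (m : ℝ)) * Real.exp 1 ^ m) *
        ((m : ℝ) ^ q * x ^ m / ((m.factorial : ℝ) * m.factorial)) := by field_simp
    _ = _ := by rw [he, one_mul]

lemma Gamma_eq_gammaRatio (s : ℝ) (m : ℕ) (hm : 0 < m) :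
    Real.Gamma ((m : ℝ) + s) = gammaRatio s m * (m : ℝ) ^ s * m.factorial / m := by
  have hm' : (0 : ℝ) < m := by exact_mod_cast hm
  have hpow : (m : ℝ) ^ s ≠ 0 := (Real.rpow_pos_of_pos hm' s).ne'
  have hf : (m.factorial : ℝ) ≠ 0 := by positivity
  rw [gammaRatio]
  field_simp

/-- Prefactor of the first summand, up to constants and after division by `m ^ (-(1 + 2ν))`. -/
lemma tendsto_prefactor_first (e ν : ℝ) (he : 2 ≤ e) (hν : 0 < ν)
    (hνint : ∀ n : ℤ, ν ≠ (n : ℝ)) :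
    Tendsto (fun m : ℕ => Real.Gamma ((m : ℝ) - ν) *
      ((2 * (m : ℝ) + e - 1) * Real.Gamma ((m : ℝ) + e - 1) / (Nat.factorial m : ℝ)) /
      Real.Gamma ((m : ℝ) + ν + e) / (m : ℝ) ^ (-(1 + 2 * ν))) atTop (nhds 2) := by
  have h1 := tendsto_gammaRatio (-ν) fun j hj => hνint j (by push_cast; linarith)
  have h2 := tendsto_gammaRatio (e - 1) fun j => by
    have : (0 : ℝ) ≤ j := j.cast_nonneg
    linarith
  have h3 := tendsto_gammaRatio (ν + e) fun j => by positivity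
  have h := ((h1.mul h2).mul (h3.inv₀ one_ne_zero)).mul (tendsto_add_div 2 (e - 1))
  simp only [one_mul, inv_one] at h
  refine h.congr' ?_
  filter_upwards [eventually_gt_atTop 0] with m hm
  have hm' : (0 : ℝ) < m := by exact_mod_cast hm
  have hf : (m.factorial : ℝ) ≠ 0 := by positivity
  rw [sub_eq_add_neg (m : ℝ) ν, add_sub_assoc, add_sub_assoc, add_assoc (m : ℝ) ν e,
    Gamma_eq_gammaRatio _ _ hm, Gamma_eq_gammaRatio _ _ hm, Gamma_eq_gammaRatio _ _ hm]
  have hp : (m : ℝ) ^ (-ν) * (m : ℝ) ^ (e - 1) * m =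
      (m : ℝ) ^ (ν + e) * (m : ℝ) ^ (-(1 + 2 * ν)) * m := by
    rw [← Real.rpow_add hm', ← Real.rpow_add hm']
    congr 2
    ring
  have hp1 : (m : ℝ) ^ (ν + e) ≠ 0 := (Real.rpow_pos_of_pos hm' _).ne'
  have hp2 : (m : ℝ) ^ (-(1 + 2 * ν)) ≠ 0 := (Real.rpow_pos_of_pos hm' _).ne'
  have hp' := mul_right_cancel₀ hm'.ne' hp
  have hr : gammaRatio (ν + e) m ≠ 0 := by
    have : 0 < Real.Gamma ((m : ℝ) + (ν + e)) := Real.Gamma_pos_of_pos (by positivity)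
    rw [Gamma_eq_gammaRatio _ _ hm] at this
    intro h0
    simp [h0] at this
  calc _ = gammaRatio (-ν) m * gammaRatio (e - 1) m * (gammaRatio (ν + e) m)⁻¹ *
        ((2 * m + (e - 1)) / m) *
        ((m : ℝ) ^ (-ν) * (m : ℝ) ^ (e - 1) / ((m : ℝ) ^ (ν + e) * (m : ℝ) ^ (-(1 + 2 * ν)))) := by
        rw [hp', div_self (by positivity), mul_one]
    _ = _ := by field_simp

/-- Prefactor of the second summand, up to constants and after division by `m ^ (-(1 + 2ν))`. -/
lemma tendsto_prefactor_second (e ν α : ℝ) (he : 2 ≤ e)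
    (hνint : ∀ n : ℤ, ν ≠ (n : ℝ)) :
    Tendsto (fun m : ℕ => (-1 : ℝ) ^ m *
      ((2 * (m : ℝ) + e - 1) * Real.Gamma ((m : ℝ) + e - 1) / (Nat.factorial m : ℝ)) /
      (Real.Gamma ((m : ℝ) + 1 - ν) * Real.Gamma ((m : ℝ) + (e + 1) / 2) * (2 * α) ^ m) /
      (m : ℝ) ^ (-(1 + 2 * ν))) atTop (nhds 0) := by
  have h1 := tendsto_gammaRatio (1 - ν) fun j hj => hνint (1 + j) (by push_cast; linarith)
  have h2 := tendsto_gammaRatio (e - 1) fun j => by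
    have : (0 : ℝ) ≤ j := j.cast_nonneg
    linarith
  have h3 := tendsto_gammaRatio ((e + 1) / 2) fun j => by positivity
  have h := (((h2.mul (h1.inv₀ one_ne_zero)).mul (h3.inv₀ one_ne_zero)).mul
    (tendsto_add_div 2 (e - 1))).mul (tendsto_rpow_mul_pow_div_factorial_sq
      (e - 1 - (1 - ν) - (e + 1) / 2 + (1 + 2 * ν) + 1 + 1) (-1 / (2 * α)))
  rw [mul_zero] at h
  refine h.congr' ?_
  filter_upwards [eventually_gt_atTop 0] with m hm
  have hm' : (0 : ℝ) < m := by exact_mod_cast hm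
  have hf : (m.factorial : ℝ) ≠ 0 := by positivity
  rw [add_sub_assoc (m : ℝ) 1, add_sub_assoc, add_sub_assoc,
    Gamma_eq_gammaRatio _ _ hm, Gamma_eq_gammaRatio _ _ hm, Gamma_eq_gammaRatio _ _ hm,
    Real.rpow_add hm', Real.rpow_add hm', Real.rpow_add hm', Real.rpow_sub hm' _ ((e + 1) / 2),
    Real.rpow_sub hm' _ (1 - ν), Real.rpow_neg hm'.le, Real.rpow_one, div_pow]
  simp only [div_eq_mul_inv, mul_inv, inv_inv]
  field_simp

/-- The constant in front of the leading term, by Legendre's duplication formula. -/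
lemma leading_const (d : ℕ) (hd : 2 ≤ d) (A : ℝ) :
    (2 * π) ^ ((d : ℝ) / 2) * ((2 : ℝ) ^ ((d : ℝ) / 2) * A) *
      (Real.Gamma (((d : ℝ) + 1) / 2) / (2 * π ^ (((d : ℝ) + 1) / 2) * Real.Gamma (d : ℝ))) =
      A / Real.Gamma ((d : ℝ) / 2) := by
  have hd' : (0 : ℝ) < d := by positivity
  have hL := Real.Gamma_mul_Gamma_add_half ((d : ℝ) / 2)
  rw [show (d : ℝ) / 2 + 1 / 2 = (d + 1) / 2 by ring, show 2 * ((d : ℝ) / 2) = d by ring,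
    Real.rpow_sub two_pos, Real.rpow_one, Real.sqrt_eq_rpow] at hL
  have hG1 := (Real.Gamma_pos_of_pos hd').ne'
  have hG2 := (Real.Gamma_pos_of_pos (half_pos hd')).ne'
  have h2 : (2 : ℝ) ^ ((d : ℝ) / 2) * (2 : ℝ) ^ ((d : ℝ) / 2) = 2 ^ (d : ℝ) := by
    rw [← Real.rpow_add two_pos]
    congr 1
    ring
  have hpi : π ^ (((d : ℝ) + 1) / 2) = π ^ ((d : ℝ) / 2) * π ^ ((1 : ℝ) / 2) := by
    rw [← Real.rpow_add Real.pi_pos]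
    congr 1
    ring
  have hX : Real.Gamma (((d : ℝ) + 1) / 2) =
      Real.Gamma d * (2 / 2 ^ (d : ℝ)) * π ^ ((1 : ℝ) / 2) / Real.Gamma ((d : ℝ) / 2) := by
    rw [eq_div_iff hG2, mul_comm]
    exact hL
  rw [hX, hpi, Real.mul_rpow two_pos.le Real.pi_pos.le, ← h2]
  have hp1 : π ^ ((d : ℝ) / 2) ≠ 0 := (Real.rpow_pos_of_pos Real.pi_pos _).ne'
  have hp2 : π ^ ((1 : ℝ) / 2) ≠ 0 := (Real.rpow_pos_of_pos Real.pi_pos _).ne'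
  have hp3 : (2 : ℝ) ^ ((d : ℝ) / 2) ≠ 0 := (Real.rpow_pos_of_pos two_pos _).ne'
  field_simp

theorem stmt3 (d : ℕ) (hd : 2 ≤ d) (α ν : ℝ) (hα : 0 < α) (hν : 0 < ν)
    (hνint : ∀ n : ℤ, ν ≠ (n : ℝ)) :
    Tendsto (fun m : ℕ =>
      maternCoef d α ν m /
        ((2 / α ^ (2 * ν)) *
          (Real.Gamma (ν + (d : ℝ) / 2) / (Real.Gamma ν * Real.Gamma ((d : ℝ) / 2))) *
          (m : ℝ) ^ (-(1 + 2 * ν))))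
      atTop (nhds 1) := by
  have hd' : (2 : ℝ) ≤ d := by exact_mod_cast hd
  have hz : 0 < 1 / α ^ 2 := by positivity
  have hA := (tendsto_prefactor_first d ν hd' hν hνint).mul
    (tendsto_hyp_first (ν + (d : ℝ) / 2) ν d (1 / α ^ 2) (by positivity) hν (by linarith) hz hνint)
  have hB := (tendsto_prefactor_second d ν α hd' hνint).mul
    (tendsto_hyp_second d ν (1 / α ^ 2) (by linarith) hz)
  rw [mul_one] at hA
  rw [zero_mul] at hB
  have hG1 := (Real.Gamma_pos_of_pos hν).ne'
  have hG2 := (Real.Gamma_pos_of_pos (by positivity : 0 < (d : ℝ) / 2)).ne'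
  have hG3 := (Real.Gamma_pos_of_pos (by positivity : 0 < ν + (d : ℝ) / 2)).ne'
  have hαν : α ^ (2 * ν) ≠ 0 := (Real.rpow_pos_of_pos hα _).ne'
  set A : ℝ := Real.Gamma (ν + (d : ℝ) / 2) / (Real.Gamma ν * α ^ (2 * ν)) with hAdef
  set κ : ℝ := Real.Gamma (((d : ℝ) + 1) / 2) /
    (2 * π ^ (((d : ℝ) + 1) / 2) * Real.Gamma (d : ℝ)) with hκ
  set L : ℝ := (2 / α ^ (2 * ν)) *
    (Real.Gamma (ν + (d : ℝ) / 2) / (Real.Gamma ν * Real.Gamma ((d : ℝ) / 2))) with hL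
  have hL0 : L ≠ 0 := by positivity
  have hLA : A / Real.Gamma ((d : ℝ) / 2) * 2 = L := by
    rw [hL, hAdef]
    field_simp
  have h := ((hA.const_mul (A / Real.Gamma ((d : ℝ) / 2))).add
    (hB.const_mul (2 * π ^ (((d : ℝ) + 3) / 2) / Real.Gamma ν * κ))).div_const L
  rw [mul_zero, add_zero, hLA, div_self hL0] at h
  refine h.congr fun m => ?_
  rw [maternCoef, kappaMD, ← hκ, ← leading_const d hd A, ← hκ, hAdef]
  simp only [div_eq_mul_inv, mul_inv]
  ring
end
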